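/- Let b ∈ ℕ⁺ and let φ be an instance of cubic monotone one-in-three 3-SAT. If φ has a one-in-three model, then the union U_{τ_PT^b}(φ) has the τ_PT^b-ESSP and the τ_PT^b-SSP. -/

import Mathlib

namespace PNS

/-- Events of a (b-bounded) type of nets: either a pair `(m,n)` or a group element `z ∈ {0,…,b}`. -/
inductive BEvent : Type
  | pair : ℕ → ℕ → BEvent
  | num : ℕ → BEvent
  deriving DecidableEq

/-- A type of nets `τ = (S_τ, E_τ, δ_τ)` with `S_τ ⊆ ℕ`. -/
structure NetType : Type where
  states : Set ℕ
  events : Set BEvent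
  delta : ℕ → BEvent → Option ℕ

def deltaPT (b : ℕ) : ℕ → BEvent → Option ℕ
  | s, .pair m n => if m ≤ s ∧ s - m + n ≤ b then some (s - m + n) else none
  | _, .num _ => none

def deltaZPT (b : ℕ) : ℕ → BEvent → Option ℕ
  | s, .pair m n => if m ≤ s ∧ s - m + n ≤ b then some (s - m + n) else none
  | s, .num z => some ((s + z) % (b + 1))

def deltaRZPT (b : ℕ) : ℕ → BEvent → Option ℕ
  | s, .pair m n => if s = m ∧ n ≤ b then some n else none
  | s, .num z => some ((s + z) % (b + 1))

/-- The type of `b`-bounded P/T-nets. -/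
def tauPT (b : ℕ) : NetType :=
  ⟨{s | s ≤ b}, {e | ∃ m n, e = BEvent.pair m n ∧ m ≤ b ∧ n ≤ b}, deltaPT b⟩

/-- The type of pure `b`-bounded P/T-nets. -/
def tauPPT (b : ℕ) : NetType :=
  ⟨{s | s ≤ b}, {e | ∃ m n, e = BEvent.pair m n ∧ m ≤ b ∧ n ≤ b ∧ (m = 0 ∨ n = 0)}, deltaPT b⟩

/-- The type of `ℤ_{b+1}`-extended `b`-bounded P/T-nets. -/
def tauZPT (b : ℕ) : NetType :=
  ⟨{s | s ≤ b},
   {e | (∃ m n, e = BEvent.pair m n ∧ m ≤ b ∧ n ≤ b ∧ ¬(m = 0 ∧ n = 0)) ∨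
        (∃ z, e = BEvent.num z ∧ z ≤ b)}, deltaZPT b⟩

/-- The type of pure `ℤ_{b+1}`-extended `b`-bounded P/T-nets. -/
def tauZPPT (b : ℕ) : NetType :=
  ⟨{s | s ≤ b},
   {e | (∃ m n, e = BEvent.pair m n ∧ m ≤ b ∧ n ≤ b ∧ ¬(m = 0 ∧ n = 0) ∧ (m = 0 ∨ n = 0)) ∨
        (∃ z, e = BEvent.num z ∧ z ≤ b)}, deltaZPT b⟩

/-- The type of restricted `ℤ_{b+1}`-extended `b`-bounded P/T-nets. -/
def tauRZPT (b : ℕ) : NetType :=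
  ⟨{s | s ≤ b},
   {e | (∃ m n, e = BEvent.pair m n ∧ m ≤ b ∧ n ≤ b ∧ ¬(m = 0 ∧ n = 0)) ∨
        (∃ z, e = BEvent.num z ∧ z ≤ b)}, deltaRZPT b⟩

/-- A (deterministic, initialized) transition system with states `S`, events `E`. -/
structure TS (S E : Type) : Type where
  delta : S → E → Option S
  init : S

def TS.Reachable {S E : Type} (A : TS S E) (s : S) : Prop :=
  Relation.ReflTransGen (fun x y => ∃ e, A.delta x e = some y) A.init s

/-- Every state is reachable from the initial state. -/
def TS.Initialized {S E : Type} (A : TS S E) : Prop :=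
  ∀ s, A.Reachable s

/-- A `τ`-region `(sup, sig)` of a TS `A`. -/
structure IsRegion (τ : NetType) {S E : Type} (A : TS S E)
    (sup : S → ℕ) (sig : E → BEvent) : Prop where
  sup_mem : ∀ s, sup s ∈ τ.states
  sig_mem : ∀ e, sig e ∈ τ.events
  edge : ∀ s e s', A.delta s e = some s' → τ.delta (sup s) (sig e) = some (sup s')

/-- `A` has the `τ`-state separation property. -/
def HasSSP (τ : NetType) {S E : Type} (A : TS S E) : Prop :=
  ∀ s s' : S, s ≠ s' → ∃ sup sig, IsRegion τ A sup sig ∧ sup s ≠ sup s'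

/-- `A` has the `τ`-event state separation property. -/
def HasESSP (τ : NetType) {S E : Type} (A : TS S E) : Prop :=
  ∀ (e : E) (s : S), A.delta s e = none →
    ∃ sup sig, IsRegion τ A sup sig ∧ τ.delta (sup s) (sig e) = none

def Solvable (τ : NetType) {S E : Type} (A : TS S E) : Prop :=
  HasESSP τ A ∧ HasSSP τ A

def sigMinus : BEvent → ℕ
  | .pair m _ => m
  | .num _ => 0

def sigPlus : BEvent → ℕ
  | .pair _ n => n
  | .num _ => 0

def sigAbs : BEvent → ℕ
  | .pair _ _ => 0
  | .num z => z

open Classical in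
/-- The linear TS `s₀ −ev 0→ s₁ −ev 1→ … −ev (m-1)→ s_m` on the `m+1` pairwise
distinct states `Fin (m+1)` with initial state `0`. -/
noncomputable def linTS {E : Type} (m : ℕ) (ev : ℕ → E) : TS (Fin (m + 1)) E where
  init := ⟨0, Nat.succ_pos m⟩
  delta s e :=
    if h : (s : ℕ) < m ∧ ev (s : ℕ) = e then some ⟨(s : ℕ) + 1, Nat.succ_lt_succ h.1⟩
    else none

/-- The linear TS whose sequence of edge labels is the list `l`. -/
noncomputable def linOfList {E : Type} (l : List E) (d : E) : TS (Fin (l.length + 1)) E :=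
  linTS l.length (fun i => l.getD i d)

/-- A `τ`-region of the union `U(A i)` of TS with pairwise disjoint state sets
(modeled by a sigma type) and shared events `E`. -/
def UnionRegion (τ : NetType) {ι : Type} {S : ι → Type} {E : Type}
    (A : ∀ i, TS (S i) E) (sup : (Σ i, S i) → ℕ) (sig : E → BEvent) : Prop :=
  (∀ s, sup s ∈ τ.states) ∧ (∀ e, sig e ∈ τ.events) ∧
    ∀ (i : ι) (s : S i) (e : E) (s' : S i),
      (A i).delta s e = some s' → τ.delta (sup ⟨i, s⟩) (sig e) = some (sup ⟨i, s'⟩)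

/-- The union has the `τ`-SSP: every SSA (pair of distinct states of the same
constituent) is solved by a `τ`-region of the union. -/
def UnionHasSSP (τ : NetType) {ι : Type} {S : ι → Type} {E : Type}
    (A : ∀ i, TS (S i) E) : Prop :=
  ∀ (i : ι) (s s' : S i), s ≠ s' →
    ∃ sup sig, UnionRegion τ A sup sig ∧ sup ⟨i, s⟩ ≠ sup ⟨i, s'⟩

/-- The union has the `τ`-ESSP: every ESSA is solved by a `τ`-region of the union. -/
def UnionHasESSP (τ : NetType) {ι : Type} {S : ι → Type} {E : Type}
    (A : ∀ i, TS (S i) E) : Prop :=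
  ∀ (e : E) (i : ι) (s : S i), (A i).delta s e = none →
    ∃ sup sig, UnionRegion τ A sup sig ∧ τ.delta (sup ⟨i, s⟩) (sig e) = none

/-- An instance of cubic monotone one-in-three 3-SAT with `m` clauses over the
`m` variables `Fin m`: the `i`-th clause is `{cl i 0, cl i 1, cl i 2}` with
`cl i 0 < cl i 1 < cl i 2`, and every variable occurs in exactly three clauses. -/
structure CMSat (m : ℕ) : Type where
  cl : Fin m → Fin 3 → Fin m
  mono01 : ∀ i, cl i 0 < cl i 1
  mono12 : ∀ i, cl i 1 < cl i 2
  cubic : ∀ v : Fin m,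
    (Finset.univ.filter (fun i => v = cl i 0 ∨ v = cl i 1 ∨ v = cl i 2)).card = 3

/-- `M` is a one-in-three model of `φ`: every clause contains exactly one variable of `M`. -/
def OneInThreeModel {m : ℕ} (φ : CMSat m) (M : Set (Fin m)) : Prop :=
  ∀ i : Fin m, ∃! j : Fin 3, φ.cl i j ∈ M

/-- Index set of the gadgets of the union `U_{τ_PT^b}(φ)`. -/
inductive PTIdx (m : ℕ) : Type
  | H : PTIdx m
  | C : Fin 4 → PTIdx m
  | F : Fin (2 * m) → PTIdx m
  | G : Fin (2 * m) → PTIdx m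
  | M : Fin m → PTIdx m
  | T : Fin m → PTIdx m

/-- Events of the union `U_{τ_PT^b}(φ)`. -/
inductive PTEv (m : ℕ) : Type
  | k : PTEv m
  | zz : PTEv m
  | o0 : PTEv m
  | o1 : PTEv m
  | kk : Fin 4 → PTEv m
  | z : Fin (2 * m) → PTEv m
  | X : Fin m → PTEv m
  deriving DecidableEq

/-- The label sequences of the linear gadgets of `U_{τ_PT^b}(φ)`. -/
def gadPT (b : ℕ) {m : ℕ} (φ : CMSat m) : PTIdx m → List (PTEv m)
  | .H => List.replicate b .k ++ List.replicate b .zz ++ [.o0] ++ List.replicate b .k ++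
      List.replicate b .zz ++ List.replicate b .o1 ++ List.replicate b .k
  | .C j => .o0 :: .kk j :: List.replicate b .o1
  | .F j => [.kk 0, .z j]
  | .G j => [.z j, .o0]
  | .M i => .kk 1 :: List.replicate b (.X i)
  | .T i => .kk 2 :: (List.replicate b (.X (φ.cl i 0)) ++
      .z ⟨2 * (i : ℕ), by have := i.isLt; omega⟩ :: (List.replicate b (.X (φ.cl i 1)) ++
      .z ⟨2 * (i : ℕ) + 1, by have := i.isLt; omega⟩ ::
        (List.replicate b (.X (φ.cl i 2)) ++ [.kk 3])))

/-- The union `U_{τ_PT^b}(φ)` of linear gadget TS. -/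
noncomputable def UPT (b : ℕ) {m : ℕ} (φ : CMSat m) :
    ∀ i : PTIdx m, TS (Fin ((gadPT b φ i).length + 1)) (PTEv m) :=
  fun i => linOfList (gadPT b φ i) PTEv.k

/-!
A region of a union of linear transition systems amounts to a signature and initial values from
which all label words can be read, and the SSP of such a union follows from its ESSP: two states of
the same word are separated as soon as the labels after them differ or one of the words ends.

Contracting every block `e ^ b` of the gadgets to a single letter gives words that do not depend
on `b`. A Boolean region of these *skeletons*, in which an event does nothing, requires the value
`true`, or moves the value, scales to a `τ_PT^b`-region: the values become `0` and `b` tokens, and a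
move becomes a production or consumption that is spread evenly over the block. What is disabled in
the Boolean region stays disabled at the ends of the blocks, and inside the block of a moving event
every event that requires `true` is disabled.

Most instances are solved by a *switch* region, which changes from `false` to `true` with one event
`x` and requires `true` for another event `f`; it exists when `x` occurs at most once in each word
and never after `f`. Only the gadget `H`, in which `k` and `z` occur repeatedly, needs regions that
are built from a one-in-three model.
-/

section Words

variable {S E : Type} {δ : S → E → Option S} {s : S} {u v : List E}

/-- The state reached from `s` by reading the word `w` under the partial transition function `δ`,
if every letter of `w` is enabled when its turn comes. -/
def run (δ : S → E → Option S) (s : S) (w : List E) : Option S :=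
  w.foldlM δ s

@[simp]
theorem run_nil : run δ s [] = some s :=
  rfl

@[simp]
theorem run_cons (e : E) : run δ s (e :: u) = (δ s e).bind fun t => run δ t u :=
  rfl

theorem run_append : run δ s (u ++ v) = (run δ s u).bind fun t => run δ t v := by
  simp only [run, List.foldlM_append]
  rfl

theorem run_append_singleton (e : E) : run δ s (u ++ [e]) = (run δ s u).bind fun t => δ t e := by
  simp [run_append]

theorem exists_run_take_eq_some {w : List E} (h : (run δ s w).isSome) (n : ℕ) :
    ∃ t, run δ s (w.take n) = some t := by
  rw [← List.take_append_drop n w, run_append] at h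
  cases hu : run δ s (w.take n) with
  | none => simp [hu] at h
  | some t => exact ⟨t, rfl⟩

theorem run_eq_self (h : ∀ e ∈ u, δ s e = some s) : run δ s u = some s := by
  induction u with
  | nil => rfl
  | cons e u ih =>
    rw [run_cons, h e List.mem_cons_self, Option.bind_some]
    exact ih fun a ha => h a (List.mem_cons_of_mem e ha)

end Words

section LinearTS

variable {E ι : Type} {τ : NetType} {d : E}

theorem linOfList_delta_eq_some_iff {l : List E} {s s' : Fin (l.length + 1)} {e : E} :
    (linOfList l d).delta s e = some s' ↔ l[(s : ℕ)]? = some e ∧ (s' : ℕ) = s + 1 := by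
  simp only [linOfList, linTS, List.getD_eq_getElem?_getD]
  by_cases hs : (s : ℕ) < l.length
  · by_cases he : l[(s : ℕ)] = e
    · simp [hs, he, Fin.ext_iff, eq_comm]
    · simp [hs, he]
  · simp [hs]

theorem linOfList_delta_eq_none_iff {l : List E} {s : Fin (l.length + 1)} {e : E} :
    (linOfList l d).delta s e = none ↔ l[(s : ℕ)]? ≠ some e := by
  refine ⟨fun h hs => ?_, fun h => Option.eq_none_iff_forall_ne_some.2 fun s' hs' =>
    h (linOfList_delta_eq_some_iff.1 hs').1⟩
  have hlt := (List.getElem?_eq_some_iff.1 hs).1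
  simpa [h] using linOfList_delta_eq_some_iff (d := d) (s' := ⟨s + 1, by omega⟩) |>.2 ⟨hs, rfl⟩

/-- The partial transition function on the states of `τ` that the events acquire from the
signature `sig`. -/
def NetType.step (τ : NetType) (sig : E → BEvent) (s : ℕ) (e : E) : Option ℕ :=
  τ.delta s (sig e)

theorem unionHasESSP_linOfList {w : ι → List E}
    (hτ : ∀ s ∈ τ.states, ∀ e ∈ τ.events, ∀ t, τ.delta s e = some t → t ∈ τ.states)
    (h : ∀ e i n, n ≤ (w i).length → (w i)[n]? ≠ some e → ∃ (sig : E → BEvent) (s₀ : ι → ℕ),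
      (∀ e, sig e ∈ τ.events) ∧ (∀ j, s₀ j ∈ τ.states) ∧
      (∀ j, (run (τ.step sig) (s₀ j) (w j)).isSome) ∧
      run (τ.step sig) (s₀ i) ((w i).take n ++ [e]) = none) :
    UnionHasESSP τ fun i => linOfList (w i) d := by
  intro e i s hs
  obtain ⟨sig, s₀, hsig, hs₀, hrun, hnone⟩ :=
    h e i s (Nat.le_of_lt_succ s.isLt) (linOfList_delta_eq_none_iff.1 hs)
  choose sup hsup using fun j n => exists_run_take_eq_some (hrun j) n
  have hedge : ∀ j n e, (w j)[n]? = some e → τ.delta (sup j n) (sig e) = some (sup j (n + 1)) := by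
    intro j n e he
    have hnext := hsup j (n + 1)
    rwa [List.take_add_one, he, Option.toList_some, run_append_singleton, hsup] at hnext
  have hmem : ∀ j n, n ≤ (w j).length → sup j n ∈ τ.states := by
    intro j n hn
    induction n with
    | zero =>
      have h0 : s₀ j = sup j 0 := Option.some.inj (hsup j 0)
      exact h0 ▸ hs₀ j
    | succ n ih =>
      exact hτ _ (ih (by omega)) _ (hsig _) _ (hedge j n _ (List.getElem?_eq_getElem hn))
  refine ⟨fun x => sup x.1 x.2, sig, ⟨fun x => hmem _ _ (Nat.le_of_lt_succ x.2.isLt), hsig,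
    fun j s e s' hd => ?_⟩, ?_⟩
  · obtain ⟨he, hs'⟩ := linOfList_delta_eq_some_iff.1 hd
    simpa only [hs'] using hedge j s e he
  · simpa only [run_append_singleton, hsup, Option.bind_some, NetType.step] using hnone

theorem UnionHasESSP.exists_sup_ne {w : ι → List E}
    (h : UnionHasESSP τ fun i => linOfList (w i) d) (i : ι) (s s' : Fin ((w i).length + 1))
    (hlt : s < s') :
    ∃ sup sig, UnionRegion τ (fun i => linOfList (w i) d) sup sig ∧ sup ⟨i, s⟩ ≠ sup ⟨i, s'⟩ := by
  have hs : (s : ℕ) < (w i).length := by omega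
  have hstep : (linOfList (w i) d).delta s (w i)[(s : ℕ)] = some ⟨s + 1, by omega⟩ :=
    linOfList_delta_eq_some_iff.2 ⟨List.getElem?_eq_getElem hs, rfl⟩
  cases hs' : (linOfList (w i) d).delta s' (w i)[(s : ℕ)] with
  | none =>
    obtain ⟨sup, sig, hR, hnone⟩ := h _ i s' hs'
    refine ⟨sup, sig, hR, fun heq => ?_⟩
    simpa [heq, hnone] using hR.2.2 i _ _ _ hstep
  | some tgt =>
    -- Equal supports of the two states would propagate to their successors under the event.
    have htgt := (linOfList_delta_eq_some_iff.1 hs').2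
    obtain ⟨sup, sig, hR, hne⟩ := UnionHasESSP.exists_sup_ne h i ⟨s + 1, by omega⟩ tgt
      (Fin.lt_def.2 (by simp only; omega))
    refine ⟨sup, sig, hR, fun heq => hne (Option.some.inj ?_)⟩
    rw [← hR.2.2 i _ _ _ hstep, ← hR.2.2 i _ _ _ hs', heq]
termination_by (w i).length - s

theorem UnionHasESSP.unionHasSSP {w : ι → List E}
    (h : UnionHasESSP τ fun i => linOfList (w i) d) :
    UnionHasSSP τ fun i => linOfList (w i) d := by
  intro i s s' hne
  rcases lt_or_gt_of_ne hne with hlt | hlt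
  · exact h.exists_sup_ne i s s' hlt
  · obtain ⟨sup, sig, hR, hsup⟩ := h.exists_sup_ne i s' s hlt
    exact ⟨sup, sig, hR, hsup.symm⟩

end LinearTS

section BlowUp

variable {E : Type} {r : E → ℕ}

/-- The word obtained from `w` by repeating each letter `e` consecutively `r e` times. -/
def blowUp (r : E → ℕ) (w : List E) : List E :=
  w.flatMap fun e => List.replicate (r e) e

theorem blowUp_cons (e : E) (w : List E) :
    blowUp r (e :: w) = List.replicate (r e) e ++ blowUp r w :=
  List.flatMap_cons

theorem exists_take_blowUp_eq (w : List E) {n : ℕ} (hn : n ≤ (blowUp r w).length) :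
    (∃ k ≤ w.length, (blowUp r w).take n = blowUp r (w.take k) ∧ (blowUp r w)[n]? = w[k]?) ∨
    ∃ k e j, w[k]? = some e ∧ 0 < j ∧ j < r e ∧
      (blowUp r w).take n = blowUp r (w.take k) ++ List.replicate j e ∧
      (blowUp r w)[n]? = some e := by
  induction w generalizing n with
  | nil => exact Or.inl ⟨0, le_rfl, by simp [blowUp], by simp [blowUp]⟩
  | cons a w ih =>
    rw [blowUp_cons] at hn ⊢
    rcases Nat.lt_or_ge n (r a) with hlt | hge
    · have hget : (List.replicate (r a) a ++ blowUp r w)[n]? = some a := by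
        simp [List.getElem?_append_left, hlt]
      have htake : (List.replicate (r a) a ++ blowUp r w).take n = List.replicate n a := by
        simp [List.take_append_of_le_length, hlt.le]
      rcases Nat.eq_zero_or_pos n with rfl | hpos
      · exact Or.inl ⟨0, Nat.zero_le _, by simp [blowUp], hget⟩
      · exact Or.inr ⟨0, a, n, rfl, hpos, hlt, by simpa [blowUp] using htake, hget⟩
    · obtain ⟨n, rfl⟩ := Nat.exists_eq_add_of_le hge
      have hget : (List.replicate (r a) a ++ blowUp r w)[r a + n]? = (blowUp r w)[n]? := by
        simp [List.getElem?_append_right]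
      have htake : (List.replicate (r a) a ++ blowUp r w).take (r a + n) =
          List.replicate (r a) a ++ (blowUp r w).take n := by
        simp [List.take_append]
      rw [hget, htake]
      rcases ih (n := n) (by simpa using hn) with
        ⟨k, hk, hpre, hnext⟩ | ⟨k, e, j, hk, hj, hj', hpre, hnext⟩
      · exact Or.inl ⟨k + 1, by simpa using hk, by simp [blowUp_cons, hpre], by simpa using hnext⟩
      · exact Or.inr ⟨k + 1, e, j, by simpa using hk, hj, hj', by simp [blowUp_cons, hpre], hnext⟩

end BlowUp

section BoolRegion

/-- The interactions of Boolean nets that survive scaling to `b`-bounded P/T-nets: `nop` does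
nothing, `used` requires the value `true` and keeps it, and `move x` changes the value `!x` into
`x`; so `move true` and `move false` are the interactions usually called `out` and `inp`. -/
inductive Interaction : Type
  | nop : Interaction
  | used : Interaction
  | move : Bool → Interaction

/-- The partial transition function of the type of Boolean nets. -/
def Interaction.step : Interaction → Bool → Option Bool
  | .nop, x => some x
  | .used, x => if x then some true else none
  | .move y, x => if x = y then none else some y

theorem Interaction.step_nop (x : Bool) : Interaction.nop.step x = some x :=
  rfl

theorem Interaction.step_move_not (y : Bool) : (Interaction.move y).step (!y) = some y := by
  cases y <;> rfl

/-- A Boolean region of the union of the linear transition systems with label words `w`: an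
interaction for every event, together with initial values from which all words can be read. -/
structure BoolRegion {ι E : Type} (w : ι → List E) : Type where
  act : E → Interaction
  start : ι → Bool
  isSome_run : ∀ i, (run (fun x e => (act e).step x) (start i) (w i)).isSome

variable {ι E : Type} {w : ι → List E}

/-- `f` is not enabled in the region `R` after the first `n` letters of the word `w i`. -/
def BoolRegion.Disables (R : BoolRegion w) (i : ι) (n : ℕ) (f : E) : Prop :=
  run (fun x e => (R.act e).step x) (R.start i) ((w i).take n ++ [f]) = none

/-- The condition under which `R`, once scaled, disables `f` inside the block that arises from
repeating the letter `e` at position `n` of `w i`. If `e` moves the value then the token counts in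
the block lie strictly between `0` and `b`, where `used` is disabled but a move need not be;
otherwise they equal the count before the block. -/
def BoolRegion.DisablesWithin (R : BoolRegion w) (i : ι) (n : ℕ) (e f : E) : Prop :=
  (R.act f = .used ∧ ∃ x, R.act e = .move x) ∨ ((∀ x, R.act e ≠ .move x) ∧ R.Disables i n f)

/-- Some Boolean region disables `f` at position `n` of `w i`, and some Boolean region disables it
inside the block that arises from repeating the letter at this position. -/
def Separable (w : ι → List E) (f : E) (i : ι) (n : ℕ) : Prop :=
  (∃ R : BoolRegion w, R.Disables i n f) ∧
    ∀ e, (w i)[n]? = some e → ∃ R : BoolRegion w, R.DisablesWithin i n e f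

end BoolRegion

section Scaling

variable {E : Type} {b c n : ℕ} {sig : E → BEvent} {e : E}

theorem mem_states_of_delta_eq_some {s t : ℕ} {a : BEvent} (h : (tauPT b).delta s a = some t) :
    t ∈ (tauPT b).states := by
  cases a with
  | pair p q =>
    simp only [tauPT, deltaPT, Option.ite_none_right_eq_some, Option.some.injEq] at h
    exact h.2 ▸ h.1.2
  | num z => cases h

theorem run_replicate_produce {s : ℕ} (he : sig e = .pair 0 c) (h : s + n * c ≤ b) :
    run ((tauPT b).step sig) s (List.replicate n e) = some (s + n * c) := by
  induction n generalizing s with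
  | zero => simp
  | succ n ih =>
    rw [Nat.succ_mul] at h ⊢
    have hstep : (tauPT b).step sig s e = some (s + c) := by
      simp only [NetType.step, he, tauPT, deltaPT]
      exact if_pos (by omega)
    rw [List.replicate_succ, run_cons, hstep, Option.bind_some, ih (by omega)]
    congr 1
    omega

theorem run_replicate_consume {s : ℕ} (he : sig e = .pair c 0) (h : n * c ≤ s) (hs : s ≤ b) :
    run ((tauPT b).step sig) s (List.replicate n e) = some (s - n * c) := by
  induction n generalizing s with
  | zero => simp
  | succ n ih =>
    rw [Nat.succ_mul] at h ⊢
    have hstep : (tauPT b).step sig s e = some (s - c) := by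
      simp only [NetType.step, he, tauPT, deltaPT]
      exact if_pos (by omega)
    rw [List.replicate_succ, run_cons, hstep, Option.bind_some, ih (by omega) (by omega)]
    congr 1
    omega

/-- The event of `τ_PT^b` that imitates an interaction when `false` and `true` are represented by
`0` and `b` tokens and moving between them takes several steps of `c` tokens each. -/
def Interaction.scale (b c : ℕ) : Interaction → BEvent
  | .nop => .pair 0 0
  | .used => .pair b b
  | .move true => .pair 0 c
  | .move false => .pair c 0

theorem Interaction.scale_mem_events (hc : c ≤ b) (a : Interaction) :
    a.scale b c ∈ (tauPT b).events := by
  rcases a with _ | _ | _ | _ <;> exact ⟨_, _, rfl, by omega, by omega⟩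

theorem Interaction.delta_scale_eq_none (hb : 0 < b) (hc : 0 < c) {a : Interaction} {x : Bool}
    (h : a.step x = none) : (tauPT b).delta (b * x.toNat) (a.scale b c) = none := by
  rcases a with _ | _ | _ | _ <;> cases x <;>
    simp_all [Interaction.step, Interaction.scale, tauPT, deltaPT, hb.ne', hc.ne']

theorem delta_used_eq_none_of_lt {s : ℕ} (h : s < b) :
    (tauPT b).delta s (Interaction.used.scale b c) = none :=
  if_neg (by omega)

theorem Interaction.eq_of_step_eq_some {a : Interaction} {x y : Bool} (ha : ∀ z, a ≠ .move z)
    (h : a.step x = some y) : x = y := by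
  rcases a with _ | _ | z <;> cases x <;> first | exact absurd rfl (ha _) | cases h <;> rfl

theorem run_replicate_scale_of_ne_move {a : Interaction} {x y : Bool} (he : sig e = a.scale b c)
    (ha : ∀ z, a ≠ .move z) (h : a.step x = some y) :
    run ((tauPT b).step sig) (b * x.toNat) (List.replicate n e) = some (b * x.toNat) := by
  refine run_eq_self fun e' he' => ?_
  rw [NetType.step, List.eq_of_mem_replicate he', he]
  rcases a with _ | _ | z <;> cases x <;>
    first | exact absurd rfl (ha _) | cases h <;> simp [Interaction.scale, tauPT, deltaPT]

theorem run_replicate_scale {a : Interaction} {x y : Bool} (he : sig e = a.scale b c)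
    (hc : n * c = b) (h : a.step x = some y) :
    run ((tauPT b).step sig) (b * x.toNat) (List.replicate n e) = some (b * y.toNat) := by
  by_cases ha : ∃ z, a = .move z
  · obtain ⟨z, rfl⟩ := ha
    cases z <;> cases x <;> cases h
    · simpa [hc] using run_replicate_consume (n := n) (s := b) he hc.le le_rfl
    · simpa [hc] using run_replicate_produce (n := n) (s := 0) he (by omega)
  · obtain rfl : x = y := Interaction.eq_of_step_eq_some (not_exists.1 ha) h
    exact run_replicate_scale_of_ne_move he (not_exists.1 ha) h

theorem exists_run_replicate_scale_move_eq_some_lt {j : ℕ} {x y z : Bool}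
    (he : sig e = (Interaction.move y).scale b c) (hc : n * c = b) (hb : 0 < b)
    (h : (Interaction.move y).step x = some z) (hj : 0 < j) (hjn : j < n) :
    ∃ t < b, run ((tauPT b).step sig) (b * x.toNat) (List.replicate j e) = some t := by
  have hcpos : 0 < c := Nat.pos_of_mul_pos_left (hc ▸ hb)
  have hjc : 0 < j * c := Nat.mul_pos hj hcpos
  have hjcb : j * c < b := hc ▸ Nat.mul_lt_mul_of_pos_right hjn hcpos
  cases y <;> cases x <;> cases h
  · exact ⟨b - j * c, by omega, by simpa using run_replicate_consume (s := b) he hjcb.le le_rfl⟩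
  · exact ⟨j * c, hjcb, by simpa using run_replicate_produce (s := 0) he (by omega)⟩

end Scaling

namespace BoolRegion

variable {ι E : Type} {w : ι → List E} {b : ℕ} {r : E → ℕ}

/-- The signature by which `R` becomes a region of the words blown up by `r`: when every `r e`
divides `b`, a move spreads over the `r e` copies of `e`. -/
def sig (R : BoolRegion w) (b : ℕ) (r : E → ℕ) (e : E) : BEvent :=
  (R.act e).scale b (b / r e)

theorem run_blowUp (R : BoolRegion w) (hr : ∀ e, r e ∣ b) {u : List E} {x y : Bool}
    (h : run (fun x e => (R.act e).step x) x u = some y) :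
    run ((tauPT b).step (R.sig b r)) (b * x.toNat) (blowUp r u) = some (b * y.toNat) := by
  induction u generalizing x with
  | nil =>
    obtain rfl : x = y := Option.some.inj h
    rfl
  | cons e u ih =>
    obtain ⟨z, hz, hu⟩ := Option.bind_eq_some_iff.1 h
    rw [blowUp_cons, run_append, run_replicate_scale (sig := R.sig b r) (a := R.act e) rfl
      (Nat.mul_div_cancel' (hr e)) hz]
    exact ih hu

theorem disables_iff {R : BoolRegion w} {i : ι} {n : ℕ} {f : E} :
    R.Disables i n f ↔ ∃ x, run (fun x e => (R.act e).step x) (R.start i) ((w i).take n) = some x ∧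
      (R.act f).step x = none := by
  obtain ⟨x, hx⟩ := exists_run_take_eq_some (R.isSome_run i) n
  simp only [Disables, run_append_singleton, hx, Option.bind_some, Option.some.injEq,
    exists_eq_left']

theorem step_sig_eq_none (R : BoolRegion w) (hb : 0 < b) (hr : ∀ e, r e ∣ b) {f : E} {x : Bool}
    (h : (R.act f).step x = none) : (tauPT b).step (R.sig b r) (b * x.toNat) f = none :=
  Interaction.delta_scale_eq_none hb
    (Nat.div_pos (Nat.le_of_dvd hb (hr f)) (Nat.pos_of_dvd_of_pos (hr f) hb)) h

theorem run_blowUp_take_eq_none (R : BoolRegion w) (hb : 0 < b) (hr : ∀ e, r e ∣ b) {i : ι}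
    {k : ℕ} {f : E} (h : R.Disables i k f) :
    run ((tauPT b).step (R.sig b r)) (b * (R.start i).toNat)
      (blowUp r ((w i).take k) ++ [f]) = none := by
  obtain ⟨x, hx, hf⟩ := disables_iff.1 h
  rw [run_append_singleton, R.run_blowUp hr hx]
  exact R.step_sig_eq_none hb hr hf

theorem run_blowUp_take_append_replicate_eq_none (R : BoolRegion w) (hb : 0 < b)
    (hr : ∀ e, r e ∣ b) {i : ι} {k j : ℕ} {e f : E} (he : (w i)[k]? = some e)
    (hj : 0 < j) (hje : j < r e) (h : R.DisablesWithin i k e f) :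
    run ((tauPT b).step (R.sig b r)) (b * (R.start i).toNat)
      (blowUp r ((w i).take k) ++ List.replicate j e ++ [f]) = none := by
  obtain ⟨x, hx⟩ := exists_run_take_eq_some (R.isSome_run i) k
  obtain ⟨y, hy⟩ : ∃ y, (R.act e).step x = some y := by
    obtain ⟨y, hy⟩ := exists_run_take_eq_some (R.isSome_run i) (k + 1)
    rw [List.take_add_one, he, Option.toList_some, run_append_singleton, hx] at hy
    exact ⟨y, hy⟩
  rw [run_append_singleton, run_append, R.run_blowUp hr hx, Option.bind_some]
  rcases h with ⟨hf, z, hz⟩ | ⟨hz, hf⟩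
  · have hsig : R.sig b r e = (Interaction.move z).scale b (b / r e) := by rw [sig, hz]
    obtain ⟨t, ht, hrun⟩ := exists_run_replicate_scale_move_eq_some_lt hsig
      (Nat.mul_div_cancel' (hr e)) hb (hz ▸ hy) hj hje
    rw [hrun, Option.bind_some, NetType.step, sig, hf]
    exact delta_used_eq_none_of_lt ht
  · obtain ⟨x', hx', hf⟩ := disables_iff.1 hf
    obtain rfl : x = x' := Option.some.inj (hx.symm.trans hx')
    rw [run_replicate_scale_of_ne_move (sig := R.sig b r) rfl hz hy, Option.bind_some]
    exact R.step_sig_eq_none hb hr hf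

theorem isSome_run_blowUp (R : BoolRegion w) (hr : ∀ e, r e ∣ b) (i : ι) :
    (run ((tauPT b).step (R.sig b r)) (b * (R.start i).toNat) (blowUp r (w i))).isSome := by
  obtain ⟨y, hy⟩ := Option.isSome_iff_exists.1 (R.isSome_run i)
  simp [R.run_blowUp hr hy]

end BoolRegion

theorem unionHasESSP_of_eq_blowUp {ι E : Type} {v w : ι → List E} {b : ℕ} {r : E → ℕ} {d : E}
    (hb : 0 < b) (hr : ∀ e, r e ∣ b) (hv : ∀ i, v i = blowUp r (w i))
    (h : ∀ f i n, n ≤ (w i).length → (w i)[n]? ≠ some f → Separable w f i n) :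
    UnionHasESSP (tauPT b) fun i => linOfList (v i) d := by
  obtain rfl := funext hv
  have hregion : ∀ (R : BoolRegion w) (i : ι) (u : List E),
      run ((tauPT b).step (R.sig b r)) (b * (R.start i).toNat) u = none →
      ∃ (sig : E → BEvent) (s₀ : ι → ℕ),
        (∀ e, sig e ∈ (tauPT b).events) ∧ (∀ j, s₀ j ∈ (tauPT b).states) ∧
        (∀ j, (run ((tauPT b).step sig) (s₀ j) (blowUp r (w j))).isSome) ∧
        run ((tauPT b).step sig) (s₀ i) u = none := fun R i u hu =>
    ⟨R.sig b r, fun j => b * (R.start j).toNat,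
      fun e => Interaction.scale_mem_events (Nat.div_le_self _ _) _,
      fun j => mul_le_of_le_one_right (Nat.zero_le b) (R.start j).toNat_le,
      R.isSome_run_blowUp hr, hu⟩
  refine unionHasESSP_linOfList (fun _ _ _ _ _ => mem_states_of_delta_eq_some) fun f i n hn hf => ?_
  rcases exists_take_blowUp_eq (w i) hn with
    ⟨k, hk, hpre, hnext⟩ | ⟨k, e, j, he, hj, hje, hpre, hnext⟩
  · obtain ⟨⟨R, hR⟩, -⟩ := h f i k hk (hnext ▸ hf)
    exact hregion R i _ (hpre ▸ R.run_blowUp_take_eq_none hb hr hR)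
  · have hk : k ≤ (w i).length := (List.getElem?_eq_some_iff.1 he).1.le
    obtain ⟨R, hR⟩ := (h f i k hk (by rwa [he, ← hnext])).2 e he
    exact hregion R i _ (hpre ▸ R.run_blowUp_take_append_replicate_eq_none hb hr he hj hje hR)

section Switch

variable {ι E : Type} {w : ι → List E} {e f x y : E} {i : ι} {n : ℕ}

/-- In none of the words `w i` does an occurrence of `y` precede an occurrence of `x`. In
particular, `NeverBefore w x x` says that `x` occurs at most once in each word. -/
def NeverBefore (w : ι → List E) (y x : E) : Prop :=
  ∀ i, ¬ [y, x].Sublist (w i)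

theorem NeverBefore.notMem_of_eq_append (h : NeverBefore w y x) {u v : List E} (hw : w i = u ++ v)
    (hx : x ∈ v) : y ∉ u := fun hy =>
  h i (hw ▸ (List.singleton_sublist.2 hy).append (List.singleton_sublist.2 hx))

theorem separable_of_disables {R : BoolRegion w} (h : R.Disables i n f)
    (he : R.act f = .used ∨ ∀ e, (w i)[n]? = some e → ∀ x, R.act e ≠ .move x) :
    Separable w f i n := by
  refine ⟨⟨R, h⟩, fun e hn => ⟨R, ?_⟩⟩
  by_cases hmove : ∃ x, R.act e = .move x
  · exact Or.inl ⟨he.resolve_right fun he => hmove.elim (he e hn), hmove⟩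
  · exact Or.inr ⟨not_exists.1 hmove, h⟩

open scoped Classical in
/-- The region that has the value `true` throughout exactly in the words containing `f`. -/
noncomputable def containsRegion (w : ι → List E) (f : E) : BoolRegion w where
  act e := if e = f then .used else .nop
  start i := decide (f ∈ w i)
  isSome_run i := by
    rw [run_eq_self fun e he => ?_, Option.isSome_some]
    split_ifs with hef
    · subst hef
      simp [Interaction.step, he]
    · rfl

theorem separable_of_notMem (hf : f ∉ w i) : Separable w f i n := by
  have hstep : ∀ e ∈ w i, ((containsRegion w f).act e).step false = some false := fun e he => by
    simp [containsRegion, ne_of_mem_of_not_mem he hf, Interaction.step]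
  refine separable_of_disables (R := containsRegion w f)
    (BoolRegion.disables_iff.2 ⟨false, ?_, ?_⟩) (Or.inl (if_pos rfl))
  · rw [show (containsRegion w f).start i = false by simp [containsRegion, hf]]
    exact run_eq_self fun e he => hstep e (List.mem_of_mem_take he)
  · simp [containsRegion, Interaction.step]

open scoped Classical in
/-- The interactions of a region that switches from `false` to `true` with `x` and that uses `f`,
unless `f = x`. -/
noncomputable def switchAct (x f e : E) : Interaction :=
  if e = x then .move true else if e = f then .used else .nop

theorem run_switchAct_true {u : List E} (hx : x ∉ u) :
    run (fun a e => (switchAct x f e).step a) true u = some true := by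
  refine run_eq_self fun e he => ?_
  rw [switchAct, if_neg (ne_of_mem_of_not_mem he hx)]
  split_ifs <;> rfl

theorem run_switchAct_false {u : List E} (hx : x ∉ u) (hf : f ∉ u) :
    run (fun a e => (switchAct x f e).step a) false u = some false := by
  refine run_eq_self fun e he => ?_
  rw [switchAct, if_neg (ne_of_mem_of_not_mem he hx), if_neg (ne_of_mem_of_not_mem he hf)]
  rfl

theorem NeverBefore.run_switchAct (hx : NeverBefore w x x) (hfx : NeverBefore w f x)
    {u v : List E} (hw : w i = u ++ v) (hu : x ∈ u) :
    run (fun a e => (switchAct x f e).step a) false u = some true := by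
  obtain ⟨p, q, rfl⟩ := List.append_of_mem hu
  have hp : w i = p ++ (x :: q ++ v) := by simp [hw]
  have hq : w i = (p ++ [x]) ++ (q ++ v) := by simp [hw]
  have hxq : x ∉ q := fun h => hx.notMem_of_eq_append hq (List.mem_append_left v h) (by simp)
  rw [run_append, run_switchAct_false (hx.notMem_of_eq_append hp (by simp))
    (hfx.notMem_of_eq_append hp (by simp)), Option.bind_some, run_cons, switchAct, if_pos rfl]
  exact run_switchAct_true hxq

open scoped Classical in
/-- The region that switches from `false` to `true` with `x`, is `true` throughout in the words
without `x`, and uses `f` unless `f = x`. -/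
noncomputable def switchRegion (hx : NeverBefore w x x) (hfx : NeverBefore w f x) :
    BoolRegion w where
  act := switchAct x f
  start i := decide (x ∉ w i)
  isSome_run i := by
    by_cases h : x ∈ w i
    · simp [h, hx.run_switchAct hfx (List.append_nil (w i)).symm h]
    · simp [h, run_switchAct_true h]

theorem separable_of_mem_take (hf : NeverBefore w f f) (hn : f ∈ (w i).take n) :
    Separable w f i n := by
  refine separable_of_disables (R := switchRegion hf hf) (BoolRegion.disables_iff.2 ⟨true, ?_, ?_⟩)
    (Or.inr fun e he x => ?_)
  · rw [show (switchRegion hf hf).start i = false by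
      simp [switchRegion, List.mem_of_mem_take hn]]
    exact hf.run_switchAct hf (List.take_append_drop n (w i)).symm hn
  · simp [switchRegion, switchAct, Interaction.step]
  · have hef : e ≠ f := by
      rintro rfl
      refine hf.notMem_of_eq_append (List.take_append_drop n (w i)).symm ?_ hn
      exact List.mem_of_getElem? (i := 0) (by simpa using he)
    simp [switchRegion, switchAct, hef]

theorem separable_of_notMem_take (hx : NeverBefore w x x) (hfx : NeverBefore w f x) (hne : f ≠ x)
    (hi : x ∈ w i) (hn : x ∉ (w i).take n) : Separable w f i n := by
  have hdrop : x ∈ (w i).drop n := by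
    rw [← List.take_append_drop n (w i)] at hi
    exact (List.mem_append.1 hi).resolve_left hn
  refine separable_of_disables (R := switchRegion hx hfx)
    (BoolRegion.disables_iff.2 ⟨false, ?_, ?_⟩) (Or.inl ?_)
  · rw [show (switchRegion hx hfx).start i = false by simp [switchRegion, hi]]
    exact run_switchAct_false hn
      (hfx.notMem_of_eq_append (List.take_append_drop n (w i)).symm hdrop)
  · simp [switchRegion, switchAct, hne, Interaction.step]
  · simp [switchRegion, switchAct, hne]

theorem separable_of_isChain (hnodup : ∀ x ∈ w i, NeverBefore w x x)
    (hchain : (w i).IsChain fun x y => NeverBefore w y x) (hn : (w i)[n]? ≠ some f) :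
    Separable w f i n := by
  by_cases hf : f ∈ w i
  swap
  · exact separable_of_notMem hf
  obtain ⟨j, hj, rfl⟩ := List.getElem_of_mem hf
  rcases lt_trichotomy j n with hjn | rfl | hnj
  · exact separable_of_mem_take (hnodup _ hf) (List.mem_take_iff_getElem.2 ⟨j, by omega, rfl⟩)
  · exact absurd (List.getElem?_eq_getElem hj) hn
  · obtain ⟨j, rfl⟩ := Nat.exists_eq_add_of_lt hnj
    have hpred := List.isChain_iff_getElem.1 hchain (n + j) hj
    have hmem : (w i)[n + j] ∈ w i := List.getElem_mem _
    have hsplit (k : ℕ) : (w i)[n + j] ∈ (w i).drop k → (w i)[n + j] ∉ (w i).take k :=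
      (hnodup _ hmem).notMem_of_eq_append (List.take_append_drop k (w i)).symm
    have htake : (w i)[n + j] ∈ (w i).take (n + j + 1) :=
      List.mem_take_iff_getElem.2 ⟨n + j, by omega, rfl⟩
    refine separable_of_notMem_take (hnodup _ hmem) hpred (fun heq => ?_) hmem (hsplit n ?_)
    · exact hsplit _ (heq ▸ List.mem_drop_iff_getElem.2 ⟨0, by omega, rfl⟩) htake
    · exact List.mem_drop_iff_getElem.2 ⟨j, by omega, rfl⟩

end Switch

section Gadgets

variable {m : ℕ} {φ : CMSat m}

/-- The number of consecutive copies in which an event occurs in the gadgets. -/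
def mult (b : ℕ) : PTEv m → ℕ
  | .k | .zz | .o1 | .X _ => b
  | .o0 | .kk _ | .z _ => 1

/-- The label words of the gadgets with every block of repeated events contracted to one event. -/
def skeleton (φ : CMSat m) : PTIdx m → List (PTEv m)
  | .H => [.k, .zz, .o0, .k, .zz, .o1, .k]
  | .C j => [.o0, .kk j, .o1]
  | .F j => [.kk 0, .z j]
  | .G j => [.z j, .o0]
  | .M i => [.kk 1, .X i]
  | .T i => [.kk 2, .X (φ.cl i 0), .z ⟨2 * i, by omega⟩, .X (φ.cl i 1), .z ⟨2 * i + 1, by omega⟩,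
      .X (φ.cl i 2), .kk 3]

theorem mult_dvd (b : ℕ) (e : PTEv m) : mult b e ∣ b := by
  cases e <;> simp [mult]

theorem gadPT_eq_blowUp (b : ℕ) (φ : CMSat m) (i : PTIdx m) :
    gadPT b φ i = blowUp (mult b) (skeleton φ i) := by
  cases i <;> simp [blowUp, skeleton, gadPT, mult, List.flatMap]

theorem neverBefore_self {e : PTEv m} (hk : e ≠ .k) (hz : e ≠ .zz) :
    NeverBefore (skeleton φ) e e := by
  intro i
  cases i with
  | T i =>
    have h01 := Fin.lt_def.1 (φ.mono01 i)
    have h12 := Fin.lt_def.1 (φ.mono12 i)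
    cases e <;> simp [skeleton, List.cons_sublist_cons', Fin.ext_iff] <;> omega
  | _ => cases e <;> simp_all [skeleton, List.cons_sublist_cons']

theorem isChain_skeleton_T (φ : CMSat m) (i : Fin m) :
    (skeleton φ (.T i)).IsChain fun x y => NeverBefore (skeleton φ) y x := by
  have h01 := Fin.lt_def.1 (φ.mono01 i)
  have h12 := Fin.lt_def.1 (φ.mono12 i)
  simp only [skeleton, List.isChain_cons_cons, List.IsChain.singleton, and_true]
  refine ⟨?_, ?_, ?_, ?_, ?_, ?_⟩ <;> rintro (_ | _ | _ | _ | _ | i') <;>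
    first
    | simp [skeleton, List.cons_sublist_cons']; done
    | rcases eq_or_ne i' i with rfl | hne
      · simp [skeleton, List.cons_sublist_cons', Fin.ext_iff]
        omega
      · have hval := Fin.val_ne_iff.2 hne
        simp [skeleton, List.cons_sublist_cons', Fin.ext_iff]
        omega

theorem isChain_skeleton {i : PTIdx m} (hi : i ≠ .H) :
    (skeleton φ i).IsChain fun x y => NeverBefore (skeleton φ) y x := by
  cases i with
  | H => exact absurd rfl hi
  | T i => exact isChain_skeleton_T φ i
  | C j =>
    simp only [skeleton, List.isChain_cons_cons, List.IsChain.singleton, and_true]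
    constructor <;> rintro (_ | _) <;> simp [skeleton, List.cons_sublist_cons']
  | _ =>
    simp only [skeleton, List.isChain_cons_cons, List.IsChain.singleton, and_true]
    rintro (_ | _) <;> simp [skeleton, List.cons_sublist_cons']

theorem separable_skeleton_of_ne_H {i : PTIdx m} (hi : i ≠ .H) {f : PTEv m} {n : ℕ}
    (hn : (skeleton φ i)[n]? ≠ some f) : Separable (skeleton φ) f i n := by
  refine separable_of_isChain (fun x hx => neverBefore_self ?_ ?_) (isChain_skeleton hi) hn <;>
    rintro rfl <;> cases i <;> simp_all [skeleton]

open scoped Classical in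
/-- The region induced by a one-in-three model `M`: the events `k_j` change the value from `d` to
`!d`, and `o₀`, `o₁` and the variables in `M` change it back. It exists because every clause, hence
every gadget `T i`, contains exactly one such variable between `k₂` and `k₃`. The interactions of
`k` and `z`, which only occur in the gadget `H`, are left as parameters. -/
noncomputable def modelRegion {M : Set (Fin m)} (hM : OneInThreeModel φ M) (d : Bool)
    {ak az : Interaction} (h : (ak.step d).bind az.step = some !d) : BoolRegion (skeleton φ) where
  act
    | .k => ak
    | .zz => az
    | .o0 | .o1 => .move d
    | .kk _ => .move !d
    | .z _ => .nop
    | .X v => if v ∈ M then .move d else .nop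
  start
    | .C _ | .G _ => !d
    | _ => d
  isSome_run i := by
    obtain ⟨x, hk, hz⟩ := Option.bind_eq_some_iff.1 h
    have hflip : (Interaction.move !d).step d = some !d := by
      simpa using Interaction.step_move_not (!d)
    cases i with
    | H => simp [skeleton, hk, hz, Interaction.step_move_not]
    | T i =>
      obtain ⟨j, hj, huniq⟩ := hM i
      have hM' : ∀ j', φ.cl i j' ∈ M ↔ j' = j := fun j' => ⟨huniq j', fun h => h ▸ hj⟩
      fin_cases j <;>
        simp [skeleton, hM', hflip, Interaction.step_nop, Interaction.step_move_not]
    | M v =>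
      by_cases hv : v ∈ M <;>
        simp [skeleton, hv, hflip, Interaction.step_nop, Interaction.step_move_not]
    | _ => cases d <;> rfl

/-- The region in which `k` and `z` move back and forth between `true` and `false`, for solving
instances in the gadget `H`, along which its values are `1, 0, 1, 1, 0, 1, 1, 0`. -/
def alternatingRegion (φ : CMSat m) : BoolRegion (skeleton φ) where
  act
    | .k => .move false
    | .zz => .move true
    | .o0 | .o1 => .used
    | _ => .nop
  start _ := true
  isSome_run i := by cases i <;> rfl

/-- The region whose value drops from `true` to `false` with `o₁`, which separates the last state
of the gadget `H` from the event `z`. -/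
def finalRegion (φ : CMSat m) : BoolRegion (skeleton φ) where
  act
    | .o1 => .move false
    | .zz => .used
    | _ => .nop
  start _ := true
  isSome_run i := by cases i <;> rfl

theorem separable_skeleton_H_k {M : Set (Fin m)} (hM : OneInThreeModel φ M) {n : ℕ}
    (hn : n ≤ 7) (hk : (skeleton φ .H)[n]? ≠ some .k) : Separable (skeleton φ) .k .H n := by
  refine ⟨⟨modelRegion hM true (ak := .move false) (az := .nop) rfl, ?_⟩,
    fun e he => ⟨modelRegion hM true (ak := .used) (az := .move false) rfl, Or.inl ?_⟩⟩
  · interval_cases n <;> first | rfl | exact absurd rfl hk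
  · interval_cases n <;> first | exact absurd rfl hk | cases he <;> exact ⟨rfl, _, rfl⟩

theorem separable_skeleton_H_zz {M : Set (Fin m)} (hM : OneInThreeModel φ M) {n : ℕ}
    (hn : n ≤ 7) (hz : (skeleton φ .H)[n]? ≠ some .zz) : Separable (skeleton φ) .zz .H n := by
  refine ⟨?_, fun e he =>
    ⟨modelRegion hM false (ak := .move true) (az := .used) rfl, Or.inl ?_⟩⟩
  · rcases eq_or_ne n 7 with rfl | h7
    · exact ⟨finalRegion φ, rfl⟩
    · refine ⟨alternatingRegion φ, ?_⟩
      interval_cases n <;> first | rfl | exact absurd rfl hz | exact absurd rfl h7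
  · interval_cases n <;> first | exact absurd rfl hz | cases he <;> exact ⟨rfl, _, rfl⟩

theorem separable_skeleton_H_o0 {M : Set (Fin m)} (hM : OneInThreeModel φ M) {n : ℕ}
    (ho : (skeleton φ .H)[n]? ≠ some .o0) : Separable (skeleton φ) .o0 .H n := by
  obtain h3 | h3 : 3 ≤ n ∨ n < 3 := le_or_gt 3 n
  · refine separable_of_mem_take (neverBefore_self nofun nofun)
      (List.take_subset_take_left _ h3 ?_)
    simp [skeleton]
  interval_cases n
  · exact ⟨⟨modelRegion hM false (ak := .move true) (az := .used) rfl, rfl⟩,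
      fun e he => ⟨alternatingRegion φ, Or.inl ⟨rfl, by cases he; exact ⟨_, rfl⟩⟩⟩⟩
  · exact ⟨⟨alternatingRegion φ, rfl⟩,
      fun e he => ⟨alternatingRegion φ, Or.inl ⟨rfl, by cases he; exact ⟨_, rfl⟩⟩⟩⟩
  · exact absurd rfl ho

theorem separable_skeleton_H_o1 {M : Set (Fin m)} (hM : OneInThreeModel φ M) {n : ℕ}
    (ho : (skeleton φ .H)[n]? ≠ some .o1) : Separable (skeleton φ) .o1 .H n := by
  obtain h6 | h6 : 6 ≤ n ∨ n < 6 := le_or_gt 6 n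
  · refine separable_of_mem_take (neverBefore_self nofun nofun)
      (List.take_subset_take_left _ h6 ?_)
    simp [skeleton]
  obtain h2 | h2 : n ≤ 2 ∨ 2 < n := le_or_gt n 2
  · refine separable_of_notMem_take (x := .o0) (neverBefore_self nofun nofun) ?_ nofun
      (by simp [skeleton]) (fun h => ?_)
    · rintro (_ | _) <;> simp [skeleton, List.cons_sublist_cons']
    · simpa [skeleton] using List.take_subset_take_left _ h2 h
  interval_cases n
  · exact ⟨⟨modelRegion hM true (ak := .move false) (az := .nop) rfl, rfl⟩,
      fun e he => ⟨alternatingRegion φ, Or.inl ⟨rfl, by cases he; exact ⟨_, rfl⟩⟩⟩⟩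
  · exact ⟨⟨alternatingRegion φ, rfl⟩,
      fun e he => ⟨alternatingRegion φ, Or.inl ⟨rfl, by cases he; exact ⟨_, rfl⟩⟩⟩⟩
  · exact absurd rfl ho

theorem separable_skeleton {M : Set (Fin m)} (hM : OneInThreeModel φ M) (f : PTEv m)
    (i : PTIdx m) (n : ℕ) (hn : n ≤ (skeleton φ i).length) (hf : (skeleton φ i)[n]? ≠ some f) :
    Separable (skeleton φ) f i n := by
  rcases eq_or_ne i .H with rfl | hi
  · cases f with
    | k => exact separable_skeleton_H_k hM hn hf
    | zz => exact separable_skeleton_H_zz hM hn hf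
    | o0 => exact separable_skeleton_H_o0 hM hf
    | o1 => exact separable_skeleton_H_o1 hM hf
    | _ => exact separable_of_notMem (by simp [skeleton])
  · exact separable_skeleton_of_ne_H hi hf

end Gadgets

/-- If the cubic monotone one-in-three 3-SAT instance `φ` has a
one-in-three model, then the union `U_{τ_PT^b}(φ)` has the `τ_PT^b`-ESSP and the
`τ_PT^b`-SSP. -/
theorem stmt9 (b : ℕ) (hb : 1 ≤ b) {m : ℕ} (φ : CMSat m)
    (M : Set (Fin m)) (hM : OneInThreeModel φ M) :
    UnionHasESSP (tauPT b) (UPT b φ) ∧ UnionHasSSP (tauPT b) (UPT b φ) := by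
  have hESSP : UnionHasESSP (tauPT b) (UPT b φ) :=
    unionHasESSP_of_eq_blowUp hb (mult_dvd b) (gadPT_eq_blowUp b φ) (separable_skeleton hM)
  exact ⟨hESSP, hESSP.unionHasSSP⟩

end PNS
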